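/- Let A be a Büchi automaton over alphabet 2^AP, let T = (S, R, s₀, AP, L) be a transition system, let B₁, …, Bₙ be nonblocking Büchi automata over 2^AP, and let P be their product automaton. Suppose there exists at least one infinite path of T whose trace lies in L_ω(A). Then the minimum of f_w(inf-vec(r)) over all accepting runs r of P equals the minimum of f_ω(trace(π)) over all infinite paths π of T with trace(π) ∈ L_ω(A), where f_ω(σ) = Σ_{i : σ ∉ L_ω(Bᵢ)} n^{n−i}; moreover both minima are attained, and the projection onto S of any accepting run r of P attaining the first minimum is a path π of T with trace(π) ∈ L_ω(A) attaining the second minimum. -/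

import Mathlib

/-!
A product run is the same thing as a path `π` of `T` together with a run of `A` and a run of every
`Bᵢ` on `trace π`. Projecting a product run that is accepting for `A` therefore gives a path whose
trace lies in `L_ω(A)`, and every `i` with `inf-vec(r)[i] = T` is witnessed by an accepting run of
`Bᵢ`, so `f_ω` of the projection is at most `f_w(inf-vec(r))` (`fOmega_proj_le`). Conversely, a path
with trace in `L_ω(A)` lifts to a product run accepting for `A`: use an accepting run of `Bᵢ` where
there is one, and otherwise any run, which exists because `Bᵢ` is nonblocking. This lift has cost
at most `f_ω(trace π)` (`exists_lift_le`). The two inequalities identify the two minima and show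
that optimal runs project to optimal paths; the minima are attained because costs are naturals.
-/

open scoped Classical

structure Buchi (Q A : Type*) where
  delta : Q → A → Q → Prop
  q0 : Q
  F : Set Q

def Buchi.IsRun {Q A : Type*} (B : Buchi Q A) (σ : ℕ → A) (r : ℕ → Q) : Prop :=
  r 0 = B.q0 ∧ ∀ j, B.delta (r j) (σ j) (r (j + 1))

def Buchi.AcceptingRun {Q A : Type*} (B : Buchi Q A) (r : ℕ → Q) : Prop :=
  {j | r j ∈ B.F}.Infinite

def Buchi.LangOmega {Q A : Type*} (B : Buchi Q A) : Set (ℕ → A) :=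
  {σ | ∃ r, B.IsRun σ r ∧ B.AcceptingRun r}

def Buchi.Nonblocking {Q A : Type*} (B : Buchi Q A) : Prop :=
  ∀ q a, ∃ q', B.delta q a q'

structure TransSys (S AP : Type*) where
  R : S → S → Prop
  s0 : S
  L : S → Set AP

def TransSys.IsPath {S AP : Type*} (T : TransSys S AP) (π : ℕ → S) : Prop :=
  π 0 = T.s0 ∧ ∀ j, T.R (π j) (π (j + 1))

def TransSys.trace {S AP : Type*} (T : TransSys S AP) (π : ℕ → S) : ℕ → Set AP :=
  fun j => T.L (π j)

section Product

variable {Q S AP : Type*} {n : ℕ} {Qi : Fin n → Type*}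

/-- Initial state of the product automaton. -/
def prodInit (A : Buchi Q (Set AP)) (T : TransSys S AP)
    (B : ∀ i, Buchi (Qi i) (Set AP)) : Q × S × (∀ i, Qi i) :=
  (A.q0, T.s0, fun i => (B i).q0)

/-- Transition relation of the product automaton. -/
def prodDelta (A : Buchi Q (Set AP)) (T : TransSys S AP)
    (B : ∀ i, Buchi (Qi i) (Set AP)) :
    (Q × S × (∀ i, Qi i)) → (Q × S × (∀ i, Qi i)) → Prop :=
  fun p p' =>
    T.R p.2.1 p'.2.1 ∧ A.delta p.1 (T.L p.2.1) p'.1 ∧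
      ∀ i, (B i).delta (p.2.2 i) (T.L p.2.1) (p'.2.2 i)

/-- `r` is a run of the product automaton. -/
def ProdIsRun (A : Buchi Q (Set AP)) (T : TransSys S AP)
    (B : ∀ i, Buchi (Qi i) (Set AP)) (r : ℕ → Q × S × (∀ i, Qi i)) : Prop :=
  r 0 = prodInit A T B ∧ ∀ j, prodDelta A T B (r j) (r (j + 1))

/-- `r` is accepting for the product automaton: it visits
`F_P = F × S × Q₁ × ⋯ × Qₙ` infinitely often. -/
def ProdAccepting (A : Buchi Q (Set AP)) (r : ℕ → Q × S × (∀ i, Qi i)) : Prop :=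
  {j | (r j).1 ∈ A.F}.Infinite

/-- `inf-vec(r)[i] = T` iff the weight vector's `i`-th entry (i.e. membership of the
`i`-th component in `Fᵢ`) is true at infinitely many positions. -/
def infVec (B : ∀ i, Buchi (Qi i) (Set AP)) (r : ℕ → Q × S × (∀ i, Qi i))
    (i : Fin n) : Prop :=
  {j | (r j).2.2 i ∈ (B i).F}.Infinite

end Product

/-- `f_w(v) = Σ_{i : v[i] = F} n^{n−i}`, where index `i : Fin n` stands for constraint `i+1`. -/
noncomputable def fCost (n : ℕ) (v : Fin n → Prop) : ℕ :=
  ∑ i : Fin n, if v i then 0 else n ^ (n - 1 - i.val)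

section Fomega

variable {Q S AP : Type*} {n : ℕ} {Qi : Fin n → Type*}

/-- `f_ω(σ) = Σ_{i : σ ∉ L_ω(Bᵢ)} n^{n−i}`, where index `i : Fin n` stands for
constraint `i + 1`. -/
noncomputable def fOmega (B : ∀ i, Buchi (Qi i) (Set AP)) (σ : ℕ → Set AP) : ℕ :=
  ∑ i : Fin n, if σ ∈ (B i).LangOmega then 0 else n ^ (n - 1 - i.val)

end Fomega

theorem Buchi.Nonblocking.exists_run {Q A : Type*} {B : Buchi Q A} (hB : B.Nonblocking)
    (σ : ℕ → A) : ∃ r, B.IsRun σ r := by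
  choose next hnext using hB
  exact ⟨fun j => Nat.rec B.q0 (fun k q => next q (σ k)) j, rfl, fun j => hnext _ _⟩

/-- A nonblocking automaton has, on every word, a run that is accepting whenever the word is
accepted. -/
theorem Buchi.Nonblocking.exists_best_run {Q A : Type*} {B : Buchi Q A} (hB : B.Nonblocking)
    (σ : ℕ → A) : ∃ r, B.IsRun σ r ∧ (σ ∈ B.LangOmega → B.AcceptingRun r) := by
  by_cases h : σ ∈ B.LangOmega
  · obtain ⟨r, hr, hacc⟩ := h
    exact ⟨r, hr, fun _ => hacc⟩
  · obtain ⟨r, hr⟩ := hB.exists_run σ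
    exact ⟨r, hr, fun h' => absurd h' h⟩

/-- The cost decreases as more entries of the vector become true; through `fOmega_eq_fCost` this
compares `f_w` with `f_ω`. -/
theorem fCost_antitone {n : ℕ} {v w : Fin n → Prop} (h : ∀ i, w i → v i) :
    fCost n v ≤ fCost n w := by
  unfold fCost
  refine Finset.sum_le_sum fun i _ => ?_
  by_cases hw : w i
  · simp [hw, h i hw]
  · rw [if_neg hw]
    split_ifs <;> simp

section Projection

variable {Q S AP : Type*} {n : ℕ} {Qi : Fin n → Type*}

theorem fOmega_eq_fCost (B : ∀ i, Buchi (Qi i) (Set AP)) (σ : ℕ → Set AP) :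
    fOmega B σ = fCost n (fun i => σ ∈ (B i).LangOmega) := rfl

theorem isPath_proj {A : Buchi Q (Set AP)} {T : TransSys S AP}
    {B : ∀ i, Buchi (Qi i) (Set AP)} {r : ℕ → Q × S × (∀ i, Qi i)}
    (hr : ProdIsRun A T B r) : T.IsPath (fun j => (r j).2.1) :=
  ⟨by simp [hr.1, prodInit], fun j => (hr.2 j).1⟩

theorem trace_proj_mem {A : Buchi Q (Set AP)} {T : TransSys S AP}
    {B : ∀ i, Buchi (Qi i) (Set AP)} {r : ℕ → Q × S × (∀ i, Qi i)}
    (hr : ProdIsRun A T B r) (hacc : ProdAccepting A r) :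
    T.trace (fun j => (r j).2.1) ∈ A.LangOmega :=
  ⟨fun j => (r j).1, ⟨by simp [hr.1, prodInit], fun j => (hr.2 j).2.1⟩, hacc⟩

/-- The inequality may be strict, since `r` can carry a rejecting run of `Bᵢ` on a word that `Bᵢ`
accepts through another run. -/
theorem fOmega_proj_le {A : Buchi Q (Set AP)} {T : TransSys S AP}
    {B : ∀ i, Buchi (Qi i) (Set AP)} {r : ℕ → Q × S × (∀ i, Qi i)}
    (hr : ProdIsRun A T B r) :
    fOmega B (T.trace (fun j => (r j).2.1)) ≤ fCost n (infVec B r) := by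
  rw [fOmega_eq_fCost]
  refine fCost_antitone fun i hi => ?_
  exact ⟨fun j => (r j).2.2 i, ⟨by simp [hr.1, prodInit], fun j => (hr.2 j).2.2 i⟩, hi⟩

theorem exists_lift_le {A : Buchi Q (Set AP)} {T : TransSys S AP}
    {B : ∀ i, Buchi (Qi i) (Set AP)} (hB : ∀ i, (B i).Nonblocking) {π : ℕ → S}
    (hπ : T.IsPath π) (hA : T.trace π ∈ A.LangOmega) :
    ∃ r : ℕ → Q × S × (∀ i, Qi i), ProdIsRun A T B r ∧ ProdAccepting A r ∧
      fCost n (infVec B r) ≤ fOmega B (T.trace π) := by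
  obtain ⟨a, ha, hacc⟩ := hA
  choose b hb hbacc using fun i => (hB i).exists_best_run (T.trace π)
  refine ⟨fun j => (a j, π j, fun i => b i j), ⟨?_, fun j => ?_⟩, hacc, ?_⟩
  · simp [prodInit, ha.1, hπ.1, fun i => (hb i).1]
  · exact ⟨hπ.2 j, ha.2 j, fun i => (hb i).2 j⟩
  · rw [fOmega_eq_fCost]
    exact fCost_antitone hbacc

end Projection

/-- A cost in `ℕ` attains its minimum over any nonempty class. -/
theorem exists_min_cost {α : Type*} {p : α → Prop} (f : α → ℕ) (h : ∃ x, p x) :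
    ∃ x, p x ∧ ∀ y, p y → f x ≤ f y := by
  obtain ⟨x, hx, hmin⟩ := (measure f).wf.has_min {x | p x} h
  exact ⟨x, hx, fun y hy => not_lt.mp (hmin y hy)⟩

/-- If `T` has a path whose trace is in `L_ω(A)`, then the minimum of
`f_w(inf-vec(r))` over accepting runs `r` of `P` equals the minimum of `f_ω(trace(π))`
over paths `π` of `T` with `trace(π) ∈ L_ω(A)`; both minima are attained, and the
projection of any accepting run attaining the first minimum is a path attaining the
second. -/
theorem min_cost_run_eq_min_cost_path
    {Q S AP : Type*} {n : ℕ} {Qi : Fin n → Type*}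
    [Finite Q] [Finite S] [∀ i, Finite (Qi i)]
    (A : Buchi Q (Set AP)) (T : TransSys S AP)
    (B : ∀ i, Buchi (Qi i) (Set AP)) (hB : ∀ i, (B i).Nonblocking)
    (hex : ∃ π : ℕ → S, T.IsPath π ∧ T.trace π ∈ A.LangOmega) :
    (∃ r : ℕ → Q × S × (∀ i, Qi i), (ProdIsRun A T B r ∧ ProdAccepting A r) ∧
      ∀ r' : ℕ → Q × S × (∀ i, Qi i), ProdIsRun A T B r' → ProdAccepting A r' →
        fCost n (infVec B r) ≤ fCost n (infVec B r')) ∧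
    (∃ π : ℕ → S, (T.IsPath π ∧ T.trace π ∈ A.LangOmega) ∧
      ∀ π' : ℕ → S, T.IsPath π' → T.trace π' ∈ A.LangOmega →
        fOmega B (T.trace π) ≤ fOmega B (T.trace π')) ∧
    (∀ (r : ℕ → Q × S × (∀ i, Qi i)) (π : ℕ → S),
      ProdIsRun A T B r → ProdAccepting A r →
      (∀ r' : ℕ → Q × S × (∀ i, Qi i), ProdIsRun A T B r' → ProdAccepting A r' →
        fCost n (infVec B r) ≤ fCost n (infVec B r')) →
      T.IsPath π → T.trace π ∈ A.LangOmega →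
      (∀ π' : ℕ → S, T.IsPath π' → T.trace π' ∈ A.LangOmega →
        fOmega B (T.trace π) ≤ fOmega B (T.trace π')) →
      fCost n (infVec B r) = fOmega B (T.trace π)) ∧
    (∀ r : ℕ → Q × S × (∀ i, Qi i),
      ProdIsRun A T B r → ProdAccepting A r →
      (∀ r' : ℕ → Q × S × (∀ i, Qi i), ProdIsRun A T B r' → ProdAccepting A r' →
        fCost n (infVec B r) ≤ fCost n (infVec B r')) →
      (T.IsPath (fun j => (r j).2.1) ∧
        T.trace (fun j => (r j).2.1) ∈ A.LangOmega ∧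
        ∀ π' : ℕ → S, T.IsPath π' → T.trace π' ∈ A.LangOmega →
          fOmega B (T.trace (fun j => (r j).2.1)) ≤ fOmega B (T.trace π'))) := by
  -- An optimal run costs at most the lift of any path, so it bounds `fOmega` from below.
  have key : ∀ r : ℕ → Q × S × (∀ i, Qi i),
      (∀ r' : ℕ → Q × S × (∀ i, Qi i), ProdIsRun A T B r' → ProdAccepting A r' →
        fCost n (infVec B r) ≤ fCost n (infVec B r')) →
      ∀ π' : ℕ → S, T.IsPath π' → T.trace π' ∈ A.LangOmega →
        fCost n (infVec B r) ≤ fOmega B (T.trace π') := by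
    intro r hmin π' hπ' hA'
    obtain ⟨r', hr', hacc', hle⟩ := exists_lift_le hB hπ' hA'
    exact (hmin r' hr' hacc').trans hle
  refine ⟨?_, ?_, ?_, ?_⟩
  · obtain ⟨π, hπ, hA⟩ := hex
    obtain ⟨r₀, hr₀, hacc₀, -⟩ := exists_lift_le hB hπ hA
    obtain ⟨r, hr, hmin⟩ := exists_min_cost
      (p := fun r => ProdIsRun A T B r ∧ ProdAccepting A r)
      (fun r => fCost n (infVec B r)) ⟨r₀, hr₀, hacc₀⟩
    exact ⟨r, hr, fun r' h₁ h₂ => hmin r' ⟨h₁, h₂⟩⟩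
  · obtain ⟨π, hπ, hmin⟩ := exists_min_cost (fun π => fOmega B (T.trace π)) hex
    exact ⟨π, hπ, fun π' h₁ h₂ => hmin π' ⟨h₁, h₂⟩⟩
  · intro r π hr hacc hmin hπ hA hminπ
    exact le_antisymm (key r hmin π hπ hA)
      ((hminπ _ (isPath_proj hr) (trace_proj_mem hr hacc)).trans (fOmega_proj_le hr))
  · intro r hr hacc hmin
    exact ⟨isPath_proj hr, trace_proj_mem hr hacc, fun π' hπ' hA' =>
      (fOmega_proj_le hr).trans (key r hmin π' hπ' hA')⟩
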